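/- Let T : X → X be a continuous map of a compact metric space and μ an ergodic T-invariant Borel probability measure. Then h_μ(T) ≥ dim̄_B(μ) · E_μ(T), where h_μ(T) is the Kolmogorov–Sinai entropy, dim̄_B(μ) the upper capacity of μ, and E_μ(T) the expansion exponent of μ. -/

import Mathlib

/-!
It suffices to bound `upperCapacity μ * lam` by the entropy for each positive rate `lam` in
`measExpSet T μ`. Take a finite partition into sets of diameter less than the scale `ε` belonging to
`lam`. If two points have the same itinerary of length `n`, their orbits stay `ε`-close up to time
`n - 1`, so expansion forces their distance to be at most of order `exp (-n * lam)`. For a fixed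
centre `x` the expansion estimate fails only for a null set of `y`, and invariance of `μ` carries
this null set through the iterates of `T`; hence each cylinder of length `n` is almost contained in
a ball of radius comparable to `exp (-n * lam)` (`ae_dist_lt_of_itin_eq`, `Nmu_le_of_words`).

Thus `Nmu` at this radius is at most the number of cylinders needed to cover measure `1 - δ`, which
is at most a constant times `exp (n * b)` for any `b` larger than the entropy of the partition
(`exists_typical_words`). For this half of the Shannon–McMillan theorem, convergence in measure of
Birkhoff averages is enough, and it follows from von Neumann's mean ergodic theorem
(`tendsto_measure_le_birkhoff`). It is applied to the information of the first letter given the next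
`N` letters, where `N` is such that the mean `H (N + 1) - H N` of this function is below `b`. Along
a typical itinerary the product of the conditional probabilities is then at least `exp (-n * b)`,
while the sum of these products over all words is at most `m ^ N` (`sum_chainWeight_le`), so there
are few such words. Interpolating between consecutive radii (`limsup_ratio_le`) gives
`upperCapacity μ ≤ b / lam`.

A real `limsup` of a function unbounded above is `0`, so an infinite capacity has the value `0` and the
inequality reduces to nonnegativity of the entropy.
-/

open MeasureTheory Metric Filter

variable {X : Type*} [MetricSpace X] [MeasurableSpace X] [BorelSpace X]

/-- The set of rates `λ` witnessing uniform expansion of `T` at scale `ε` μ-a.e. around each point. -/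
def measExpSet (T : X → X) (μ : Measure X) : Set ℝ :=
  {lam | ∃ ε > (0 : ℝ), ∀ x : X,
    μ {y | y ∈ ball x ε ∧ dist (T x) (T y) < Real.exp lam * dist x y} = 0}

/-- The expansion exponent of the measure `μ` with respect to `T` (with `sSup ∅ = ⊥`). -/
noncomputable def Emeas (T : X → X) (μ : Measure X) : EReal :=
  sSup ((fun lam : ℝ => (lam : EReal)) '' measExpSet T μ)

/-- Minimal number of open `β`-balls needed to cover a set of `μ`-measure at least `1 - δ`. -/
noncomputable def Nmu (μ : Measure X) (β δ : ℝ) : ℕ :=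
  sInf {n : ℕ | ∃ F : Finset X, F.card = n ∧
    ENNReal.ofReal (1 - δ) ≤ μ (⋃ x ∈ F, ball x β)}

/-- The upper capacity of the measure `μ` (Ledrappier):
`lim_{δ→0⁺} limsup_{β→0⁺} log N_μ(X,β,δ) / (-log β)`. -/
noncomputable def upperCapacity (μ : Measure X) : ℝ :=
  limsup (fun δ : ℝ =>
      limsup (fun β : ℝ => Real.log (Nmu μ β δ) / (-Real.log β)) (nhdsWithin 0 (Set.Ioi 0)))
    (nhdsWithin 0 (Set.Ioi 0))

/-- Entropy of the finite partition of `X` into the fibers of `p : X → Fin m`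
refined along the first `n` iterates of `T`. -/
noncomputable def dynPartEntropy (T : X → X) (μ : Measure X) {m : ℕ}
    (p : X → Fin m) (n : ℕ) : ℝ :=
  -(∑ s : Fin n → Fin m,
      (μ {x | ∀ i : Fin n, p (T^[(i : ℕ)] x) = s i}).toReal *
        Real.log (μ {x | ∀ i : Fin n, p (T^[(i : ℕ)] x) = s i}).toReal)

/-- The Kolmogorov–Sinai entropy of `T` with respect to `μ`: the supremum over all finite
measurable partitions (fibers of measurable maps `X → Fin m`) of the limit of the entropies
of the refined partitions divided by `n`. -/
noncomputable def ksEntropy (T : X → X) (μ : Measure X) : EReal :=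
  ⨆ (m : ℕ) (p : X → Fin m) (_ : Measurable p),
    ((limsup (fun n : ℕ => dynPartEntropy T μ p n / n) atTop : ℝ) : EReal)

/-! ### The mean ergodic theorem for ergodic maps -/

/-- Weak law for Birkhoff sums: exceeding the mean by a fixed amount has vanishing probability.
The averages converge in `L²`, hence in measure, to a function which is constant by ergodicity. -/
theorem tendsto_measure_le_birkhoff {Ω : Type*} [MeasurableSpace Ω] {T : Ω → Ω}
    {μ : Measure Ω} [IsProbabilityMeasure μ] (herg : Ergodic T μ)
    {G : Ω → ℝ} (hG : MemLp G 2 μ) {c : ℝ} (hc : ∫ x, G x ∂μ < c) :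
    Tendsto (fun n : ℕ => μ {x | n * c ≤ ∑ k ∈ Finset.range n, G (T^[k] x)}) atTop (nhds 0) := by
  have mp : MeasurePreserving T μ μ := herg.toMeasurePreserving
  let U : Lp ℝ 2 μ →L[ℝ] Lp ℝ 2 μ :=
    (Lp.compMeasurePreservingₗᵢ ℝ T mp).toContinuousLinearMap
  have hU : ‖U‖ ≤ 1 := LinearIsometry.norm_toContinuousLinearMap_le _
  set g : Lp ℝ 2 μ := hG.toLp G with hg
  have hlim := U.tendsto_birkhoffAverage_orthogonalProjection hU g
  set S := U.eqLocus (1 : Lp ℝ 2 μ →L[ℝ] Lp ℝ 2 μ) with hS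
  set Pg : Lp ℝ 2 μ := (S.orthogonalProjectionOnto g : Lp ℝ 2 μ) with hPg
  have hUit : ∀ k, U^[k] g = ((hG.comp_measurePreserving (mp.iterate k)).toLp (G ∘ T^[k])) := by
    intro k
    have h1 : (U : Lp ℝ 2 μ → Lp ℝ 2 μ) = Lp.compMeasurePreserving T mp := rfl
    rw [h1, Lp.compMeasurePreserving_iterate]
    rfl
  -- the limit is invariant, hence constant
  obtain ⟨d, hd⟩ : ∃ d : ℝ, (Pg : Ω → ℝ) =ᵐ[μ] Function.const Ω d := by
    have hfix : U Pg = Pg := by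
      have : Pg ∈ S := (S.orthogonalProjectionOnto g).2
      rw [hS] at this
      simpa using this
    refine herg.quasiErgodic.ae_eq_const_of_ae_eq_comp_ae
      (Lp.aestronglyMeasurable Pg) ?_
    have h2 := Lp.coeFn_compMeasurePreserving Pg mp
    have h3 : Lp.compMeasurePreserving T mp Pg = Pg := hfix
    rw [h3] at h2
    exact h2.symm
  -- the constant is the mean of `G`, as the constant function `1` is invariant
  have hdG : d = ∫ x, G x ∂μ := by
    let one : Lp ℝ 2 μ := (memLp_const (1 : ℝ)).toLp (fun _ : Ω => (1 : ℝ))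
    have hone : one ∈ S := by
      rw [hS]
      have : U one = one := rfl
      simpa using this
    have horth : inner ℝ one (g - Pg) = 0 := by
      have := S.sub_starProjection_mem_orthogonal g
      exact (Submodule.mem_orthogonal _ _).1 this one hone
    rw [inner_sub_right, L2.inner_def, L2.inner_def, sub_eq_zero] at horth
    have e1 : ∫ a, inner ℝ (one a) (g a) ∂μ = ∫ x, G x ∂μ := by
      refine integral_congr_ae ?_
      filter_upwards [(memLp_const (1 : ℝ)).coeFn_toLp (μ := μ) (p := 2), hG.coeFn_toLp]
        with x h1 h2
      rw [h1, hg, h2]; simp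
    have e2 : ∫ a, inner ℝ (one a) (Pg a) ∂μ = d := by
      have : ∫ a, inner ℝ (one a) (Pg a) ∂μ = ∫ _, d ∂μ := by
        refine integral_congr_ae ?_
        filter_upwards [(memLp_const (1 : ℝ)).coeFn_toLp (μ := μ) (p := 2), hd]
          with x h1 h2
        rw [h1, h2]; simp
      simpa using this
    rw [e1, e2] at horth
    exact horth.symm
  have hmeas := tendstoInMeasure_of_tendsto_Lp hlim
  have hε : 0 < c - d := by rw [hdG]; linarith
  have h0 := hmeas (ENNReal.ofReal (c - d)) (ENNReal.ofReal_pos.2 hε)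
  refine tendsto_of_tendsto_of_tendsto_of_le_of_le' tendsto_const_nhds h0
    (Eventually.of_forall fun _ => zero_le) ?_
  filter_upwards [eventually_gt_atTop 0] with n hn
  refine measure_mono_ae ?_
  have hav : ((birkhoffAverage ℝ U _root_.id n g : Lp ℝ 2 μ) : Ω → ℝ) =ᵐ[μ]
      fun x => (n : ℝ)⁻¹ * ∑ k ∈ Finset.range n, G (T^[k] x) := by
    have hsum : ((birkhoffSum U _root_.id n g : Lp ℝ 2 μ) : Ω → ℝ) =ᵐ[μ]
      fun x => ∑ k ∈ Finset.range n, G (T^[k] x) := by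
      have : ∀ᵐ x ∂μ, ∀ k, (U^[k] g : Lp ℝ 2 μ) x = G (T^[k] x) := by
        rw [ae_all_iff]
        intro k
        rw [hUit k]
        exact (hG.comp_measurePreserving (mp.iterate k)).coeFn_toLp
      have h5 : ((birkhoffSum U _root_.id n g : Lp ℝ 2 μ) : Ω → ℝ) =ᵐ[μ]
          fun x => ∑ k ∈ Finset.range n, (U^[k] g : Lp ℝ 2 μ) x := by
        unfold birkhoffSum
        exact Lp.coeFn_fun_finsetSum _ _
      filter_upwards [this, h5] with x h6 h7
      rw [h7]
      exact Finset.sum_congr rfl fun k _ => h6 k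
    have h8 := Lp.coeFn_smul (n : ℝ)⁻¹ (birkhoffSum U _root_.id n g)
    filter_upwards [hsum, h8] with x h1 h2
    unfold birkhoffAverage
    rw [h2, Pi.smul_apply, h1, smul_eq_mul]
  filter_upwards [hav, hd] with x h1 h2 h3
  change ENNReal.ofReal (c - d) ≤ edist _ _
  rw [h1]
  have h2' : (S.orthogonalProjectionOnto g : Lp ℝ 2 μ) x = d := h2
  rw [h2', edist_dist]
  refine ENNReal.ofReal_le_ofReal ?_
  rw [Real.dist_eq]
  refine le_trans ?_ (le_abs_self _)
  have hn' : (0 : ℝ) < n := by exact_mod_cast hn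
  have h4 : (n : ℝ) * c ≤ ∑ k ∈ Finset.range n, G (T^[k] x) := h3
  have : c ≤ (n : ℝ)⁻¹ * ∑ k ∈ Finset.range n, G (T^[k] x) := by
    rw [inv_mul_eq_div, le_div_iff₀ hn']; linarith
  linarith

/-! ### Itineraries and their distribution -/

section Itineraries

variable {Ω : Type*} {m : ℕ}

/-- The itinerary of length `n` of `x` with respect to the labelling `p` of the points. -/
def itin (T : Ω → Ω) (p : Ω → Fin m) (n : ℕ) (x : Ω) : Fin n → Fin m :=
  fun i => p (T^[(i : ℕ)] x)

theorem itin_succ (T : Ω → Ω) (p : Ω → Fin m) (n : ℕ) (x : Ω) :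
    itin T p (n + 1) x = Fin.cons (p x) (itin T p n (T x)) := by
  funext i
  refine Fin.cases ?_ (fun j => ?_) i
  · simp [itin]
  · simp [itin, Function.iterate_succ_apply]

theorem tail_itin (T : Ω → Ω) (p : Ω → Fin m) (n : ℕ) (x : Ω) :
    Fin.tail (itin T p (n + 1) x) = itin T p n (T x) := by
  rw [itin_succ, Fin.tail_cons]

variable [MeasurableSpace Ω]

/-- The probability of the cylinder of points with itinerary `s`. -/
noncomputable def cylProb (T : Ω → Ω) (μ : Measure Ω) (p : Ω → Fin m) (n : ℕ)
    (s : Fin n → Fin m) : ℝ :=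
  (μ {x | itin T p n x = s}).toReal

theorem cylProb_nonneg (T : Ω → Ω) (μ : Measure Ω) (p : Ω → Fin m) (n : ℕ)
    (s : Fin n → Fin m) : 0 ≤ cylProb T μ p n s := ENNReal.toReal_nonneg

theorem measurable_itin {T : Ω → Ω} (hT : Measurable T) {p : Ω → Fin m} (hp : Measurable p)
    (n : ℕ) : Measurable (itin T p n) :=
  measurable_pi_lambda _ fun i => hp.comp (hT.iterate i)

theorem measurableSet_itin {T : Ω → Ω} (hT : Measurable T) {p : Ω → Fin m} (hp : Measurable p)
    {n : ℕ} (s : Fin n → Fin m) : MeasurableSet {x | itin T p n x = s} :=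
  measurable_itin hT hp n (measurableSet_singleton s)

theorem integral_itin {T : Ω → Ω} (hT : Measurable T) (μ : Measure Ω) [IsProbabilityMeasure μ]
    {p : Ω → Fin m} (hp : Measurable p) {n : ℕ} (φ : (Fin n → Fin m) → ℝ) :
    ∫ x, φ (itin T p n x) ∂μ = ∑ s, cylProb T μ p n s * φ s := by
  have hm := measurable_itin hT hp n
  have := Measure.isProbabilityMeasure_map (μ := μ) hm.aemeasurable
  rw [← integral_map (f := φ) hm.aemeasurable (measurable_of_finite φ).aestronglyMeasurable,
    integral_fintype (Integrable.of_finite)]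
  refine Finset.sum_congr rfl fun s _ => ?_
  rw [measureReal_def, Measure.map_apply hm (measurableSet_singleton s), smul_eq_mul]
  rfl

theorem memLp_itin {T : Ω → Ω} (hT : Measurable T) (μ : Measure Ω) [IsProbabilityMeasure μ]
    {p : Ω → Fin m} (hp : Measurable p) {n : ℕ} (φ : (Fin n → Fin m) → ℝ) (q : ENNReal) :
    MemLp (fun x => φ (itin T p n x)) q μ := by
  refine MemLp.of_bound
    ((measurable_of_finite φ).comp (measurable_itin hT hp n)).aestronglyMeasurable
    (∑ s, ‖φ s‖) (Eventually.of_forall fun x => ?_)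
  exact Finset.single_le_sum (f := fun s => ‖φ s‖) (fun s _ => norm_nonneg _) (Finset.mem_univ _)

theorem sum_cylProb {T : Ω → Ω} (hT : Measurable T) (μ : Measure Ω) [IsProbabilityMeasure μ]
    {p : Ω → Fin m} (hp : Measurable p) (n : ℕ) : ∑ s, cylProb T μ p n s = 1 := by
  have := integral_itin hT μ hp (n := n) (fun _ => (1 : ℝ))
  simpa using this.symm

theorem ae_cylProb_pos {T : Ω → Ω} {μ : Measure Ω} [IsProbabilityMeasure μ]
    {p : Ω → Fin m} (n : ℕ) : ∀ᵐ x ∂μ, 0 < cylProb T μ p n (itin T p n x) := by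
  have : ∀ᵐ x ∂μ, ∀ s : Fin n → Fin m, cylProb T μ p n s = 0 → itin T p n x ≠ s := by
    rw [ae_all_iff]
    intro s
    by_cases h : cylProb T μ p n s = 0
    · have h0 : μ {x | itin T p n x = s} = 0 := by
        simpa [cylProb, ENNReal.toReal_eq_zero_iff] using h
      filter_upwards [measure_eq_zero_iff_ae_notMem.1 h0] with x hx _
      exact hx
    · exact Eventually.of_forall fun x hx => absurd hx h
  filter_upwards [this] with x hx
  exact lt_of_le_of_ne (cylProb_nonneg ..) fun h => hx _ h.symm rfl

/-- Consistency of the cylinder probabilities: this is where invariance of `μ` enters. -/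
theorem sum_cylProb_cons {T : Ω → Ω} {μ : Measure Ω} [IsProbabilityMeasure μ]
    (mp : MeasurePreserving T μ μ) {p : Ω → Fin m} (hp : Measurable p) {n : ℕ}
    (v : Fin n → Fin m) :
    ∑ a, cylProb T μ p (n + 1) (Fin.cons a v) = cylProb T μ p n v := by
  have hT := mp.measurable
  have h1 : μ {x | itin T p n x = v} =
      ∑ a, μ {x | itin T p (n + 1) x = Fin.cons a v} := by
    rw [← mp.measure_preimage (measurableSet_itin hT hp v).nullMeasurableSet,
      ← tsum_fintype (L := SummationFilter.unconditional _), ← measure_iUnion]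
    · congr 1
      ext x
      simp [itin_succ, Fin.cons_inj]
    · intro a b hab
      refine Set.disjoint_left.2 fun x hx hy => hab ?_
      have : (Fin.cons a v : Fin (n + 1) → Fin m) = Fin.cons b v := hx.symm.trans hy
      exact (Fin.cons_inj.1 this).1
    · exact fun a => measurableSet_itin hT hp _
  unfold cylProb
  rw [h1, ENNReal.toReal_sum fun a _ => measure_ne_top _ _]

/-! ### Entropy of the iterated partition -/

theorem dynPartEntropy_eq {X : Type*} [MetricSpace X] [MeasurableSpace X] [BorelSpace X]
    (T : X → X) (μ : Measure X) (p : X → Fin m) (n : ℕ) :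
    dynPartEntropy T μ p n = -∑ s, cylProb T μ p n s * Real.log (cylProb T μ p n s) := by
  have : ∀ s : Fin n → Fin m,
      {x | itin T p n x = s} = {x | ∀ i : Fin n, p (T^[(i : ℕ)] x) = s i} := by
    intro s; ext x; exact funext_iff
  simp only [dynPartEntropy, cylProb, this]

/-- Gibbs' inequality against the uniform distribution on the `m ^ n` words. -/
theorem dynPartEntropy_le {X : Type*} [MetricSpace X] [MeasurableSpace X] [BorelSpace X]
    {T : X → X} (hT : Measurable T) (μ : Measure X) [IsProbabilityMeasure μ]
    {p : X → Fin m} (hp : Measurable p) (hm : 0 < m) (n : ℕ) :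
    dynPartEntropy T μ p n ≤ n * Real.log m := by
  rw [dynPartEntropy_eq, ← Finset.sum_neg_distrib]
  have hK : (0 : ℝ) < (m : ℝ) ^ n := by positivity
  have key : ∀ s : Fin n → Fin m, -(cylProb T μ p n s * Real.log (cylProb T μ p n s)) ≤
      cylProb T μ p n s * (n * Real.log m) + (((m : ℝ) ^ n)⁻¹ - cylProb T μ p n s) := by
    intro s
    rcases (cylProb_nonneg T μ p n s).eq_or_lt with h | h
    · rw [← h]; simp
    · set t := cylProb T μ p n s
      have h1 := Real.log_le_sub_one_of_pos (x := (t * (m : ℝ) ^ n)⁻¹) (by positivity)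
      rw [Real.log_inv, Real.log_mul h.ne' hK.ne', Real.log_pow] at h1
      have h2 := mul_le_mul_of_nonneg_left h1 h.le
      have h3 : t * ((t * (m : ℝ) ^ n)⁻¹ - 1) = ((m : ℝ) ^ n)⁻¹ - t := by
        field_simp
      rw [h3] at h2
      linarith
  refine (Finset.sum_le_sum fun s _ => key s).trans ?_
  rw [Finset.sum_add_distrib, Finset.sum_sub_distrib, ← Finset.sum_mul, sum_cylProb hT μ hp]
  simp [hK.ne']

theorem dynPartEntropy_zero {X : Type*} [MetricSpace X] [MeasurableSpace X] [BorelSpace X]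
    (T : X → X) (μ : Measure X) [IsProbabilityMeasure μ] (p : X → Fin m) :
    dynPartEntropy T μ p 0 = 0 := by
  simp [dynPartEntropy]

/-- Some increment of the entropy lies below any `b` exceeding the entropy rate: if every
increment were at least `b`, the limit rate would be at least `b`. -/
theorem exists_entropy_increment_lt {X : Type*} [MetricSpace X] [MeasurableSpace X] [BorelSpace X]
    {T : X → X} (hT : Measurable T) (μ : Measure X) [IsProbabilityMeasure μ]
    {p : X → Fin m} (hp : Measurable p) (hm : 0 < m) {b : ℝ}
    (hb : limsup (fun n : ℕ => dynPartEntropy T μ p n / n) atTop < b) :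
    ∃ N, dynPartEntropy T μ p (N + 1) - dynPartEntropy T μ p N < b := by
  by_contra! h
  have h1 : ∀ n : ℕ, n * b ≤ dynPartEntropy T μ p n := by
    intro n
    induction n with
    | zero => simp [dynPartEntropy_zero]
    | succ n ih => have := h n; push_cast; linarith
  refine hb.not_ge (le_limsup_of_frequently_le ?_ ?_)
  · refine Eventually.frequently ?_
    filter_upwards [eventually_gt_atTop 0] with n hn
    have : (0 : ℝ) < n := by exact_mod_cast hn
    rw [le_div_iff₀ this]; linarith [h1 n]
  · refine isBoundedUnder_of_eventually_le (a := Real.log m) ?_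
    filter_upwards [eventually_gt_atTop 0] with n hn
    have : (0 : ℝ) < n := by exact_mod_cast hn
    rw [div_le_iff₀ this]; linarith [dynPartEntropy_le hT μ hp hm n]

end Itineraries

/-! ### Counting typical itineraries -/

section Counting

variable {Ω : Type*} {m : ℕ}

/-- The product of the weights `r` of all subwords of length `N + 1` of a word of length
`N + n`. When `r` is a transition probability, this is the probability of the first `n` letters
under the corresponding backward Markov chain of order `N`, given the last `N` letters. -/
def chainWeight {N : ℕ} (r : (Fin (N + 1) → Fin m) → ℝ) : ∀ n : ℕ, (Fin (N + n) → Fin m) → ℝ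
  | 0, _ => 1
  | n + 1, w =>
    r (fun i => w (Fin.castLE (by omega) i)) * chainWeight r n (Fin.tail (n := N + n) w)

theorem chainWeight_nonneg {N : ℕ} {r : (Fin (N + 1) → Fin m) → ℝ} (hr : ∀ u, 0 ≤ r u) (n : ℕ)
    (w : Fin (N + n) → Fin m) : 0 ≤ chainWeight r n w := by
  induction n with
  | zero => exact zero_le_one
  | succ n ih => exact mul_nonneg (hr _) (ih _)

/-- Summing out the first letter shows by induction that only the choice of the last `N` letters
contributes to the total weight. -/
theorem sum_chainWeight_le {N : ℕ} {r : (Fin (N + 1) → Fin m) → ℝ} (hr : ∀ u, 0 ≤ r u)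
    (hs : ∀ v : Fin N → Fin m, ∑ a, r (Fin.cons a v) ≤ 1) (n : ℕ) :
    ∑ w, chainWeight r n w ≤ (m : ℝ) ^ N := by
  induction n with
  | zero => simp [chainWeight]
  | succ n ih =>
    have h1 : ∑ w : Fin (N + (n + 1)) → Fin m, chainWeight r (n + 1) w =
        ∑ z : Fin m × (Fin (N + n) → Fin m),
          r (Fin.cons z.1 (fun i => z.2 (Fin.castLE (by omega) i))) * chainWeight r n z.2 := by
      symm
      refine Fintype.sum_equiv (Fin.consEquiv (n := N + n) (fun _ => Fin m)) _ _ fun z => ?_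
      have h2 : (fun i : Fin (N + 1) => (Fin.consEquiv (n := N + n) (fun _ => Fin m)) z
          (Fin.castLE (by omega) i)) =
          Fin.cons z.1 (fun i => z.2 (Fin.castLE (by omega) i)) := by
        funext i
        refine Fin.cases ?_ (fun j => ?_) i
        · rfl
        · rfl
      change _ = r (fun i : Fin (N + 1) => (Fin.consEquiv (n := N + n) (fun _ => Fin m)) z
          (Fin.castLE (by omega) i)) * chainWeight r n _
      rw [h2]
      rfl
    rw [h1, Fintype.sum_prod_type_right]
    refine le_trans (Finset.sum_le_sum fun w _ => ?_) ih
    simp only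
    rw [← Finset.sum_mul]
    exact mul_le_of_le_one_left (chainWeight_nonneg hr n w) (hs _)

theorem chainWeight_itin {N : ℕ} (r : (Fin (N + 1) → Fin m) → ℝ) (T : Ω → Ω) (p : Ω → Fin m)
    (n : ℕ) (x : Ω) :
    chainWeight r n (itin T p (N + n) x) =
      ∏ k ∈ Finset.range n, r (itin T p (N + 1) (T^[k] x)) := by
  induction n generalizing x with
  | zero => rfl
  | succ n ih =>
    rw [Finset.prod_range_succ', mul_comm]
    have h1 : Fin.tail (n := N + n) (itin T p (N + (n + 1)) x) = itin T p (N + n) (T x) :=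
      tail_itin T p (N + n) x
    change r (itin T p (N + 1) x) *
      chainWeight r n (@Fin.tail (N + n) (fun _ => Fin m) (itin T p (N + (n + 1)) x)) = _
    rw [h1, ih]
    rfl

end Counting

/-- The upper half of the Shannon–McMillan theorem: at any rate `b` above the entropy of the
partition, all but a small part of the space is described by about `exp (n * b)` words. -/
theorem exists_typical_words {X : Type*} [MetricSpace X] [MeasurableSpace X] [BorelSpace X]
    {T : X → X} {μ : Measure X} [IsProbabilityMeasure μ] (herg : Ergodic T μ)
    {m : ℕ} (hm : 0 < m) {p : X → Fin m} (hp : Measurable p) {b : ℝ}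
    (hb : limsup (fun n : ℕ => dynPartEntropy T μ p n / n) atTop < b) :
    ∃ N : ℕ, ∀ δ > (0 : ℝ), ∀ᶠ n : ℕ in atTop, ∃ W : Finset (Fin (N + n) → Fin m),
      (W.card : ℝ) ≤ (m : ℝ) ^ N * Real.exp (n * b) ∧
      ENNReal.ofReal (1 - δ) ≤ μ {x | itin T p (N + n) x ∈ W} := by
  have mp : MeasurePreserving T μ μ := herg.toMeasurePreserving
  have hT := mp.measurable
  obtain ⟨N, hN⟩ := exists_entropy_increment_lt hT μ hp hm hb
  refine ⟨N, fun δ hδ => ?_⟩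
  let r : (Fin (N + 1) → Fin m) → ℝ := fun u =>
    cylProb T μ p (N + 1) u / cylProb T μ p N (Fin.tail u)
  have hr : ∀ u, 0 ≤ r u := fun u => div_nonneg (cylProb_nonneg ..) (cylProb_nonneg ..)
  have hs : ∀ v : Fin N → Fin m, ∑ a, r (Fin.cons a v) ≤ 1 := by
    intro v
    simp only [r, Fin.tail_cons]
    rw [← Finset.sum_div, sum_cylProb_cons mp hp]
    exact div_self_le_one _
  have hpos1 := ae_cylProb_pos (T := T) (μ := μ) (p := p) (N + 1)
  have hpos0 := mp.quasiMeasurePreserving.ae (ae_cylProb_pos (T := T) (μ := μ) (p := p) N)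
  -- the mean of the conditional information is the increment of entropy
  have hint : ∫ x, -Real.log (r (itin T p (N + 1) x)) ∂μ < b := by
    have h1 : ∫ x, -Real.log (r (itin T p (N + 1) x)) ∂μ =
        ∫ x, (Real.log (cylProb T μ p N (itin T p N (T x))) -
          Real.log (cylProb T μ p (N + 1) (itin T p (N + 1) x))) ∂μ := by
      refine integral_congr_ae ?_
      filter_upwards [hpos1, hpos0] with x hx1 hx0
      simp only [r]
      rw [tail_itin, Real.log_div hx1.ne' hx0.ne']
      ring
    have hL0 := (memLp_itin hT μ hp (n := N)
      (fun s => Real.log (cylProb T μ p N s)) 1)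
    have hL1 := (memLp_itin hT μ hp (n := N + 1)
      (fun s => Real.log (cylProb T μ p (N + 1) s)) 1)
    have h2 : ∫ x, Real.log (cylProb T μ p N (itin T p N (T x))) ∂μ =
        ∫ x, Real.log (cylProb T μ p N (itin T p N x)) ∂μ := by
      have h3 := integral_map (μ := μ) hT.aemeasurable
        (f := fun x => Real.log (cylProb T μ p N (itin T p N x)))
        (by rw [mp.map_eq]; exact hL0.aestronglyMeasurable)
      rw [mp.map_eq] at h3
      exact h3.symm
    have hL0' : Integrable (fun x => Real.log (cylProb T μ p N (itin T p N (T x)))) μ :=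
      memLp_one_iff_integrable.1 (hL0.comp_measurePreserving mp)
    rw [h1, integral_sub hL0' (memLp_one_iff_integrable.1 hL1), h2,
      integral_itin hT μ hp (fun s => Real.log (cylProb T μ p N s)),
      integral_itin hT μ hp (fun s => Real.log (cylProb T μ p (N + 1) s))]
    rw [dynPartEntropy_eq, dynPartEntropy_eq] at hN
    linarith
  have hlim := tendsto_measure_le_birkhoff herg
    (memLp_itin hT μ hp (fun s => -Real.log (r s)) 2) hint
  have hposr : ∀ᵐ x ∂μ, ∀ k : ℕ, 0 < r (itin T p (N + 1) (T^[k] x)) := by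
    rw [ae_all_iff]
    intro k
    have : ∀ᵐ x ∂μ, 0 < r (itin T p (N + 1) x) := by
      filter_upwards [hpos1, hpos0] with x hx1 hx0
      simp only [r]
      rw [tail_itin]
      exact div_pos hx1 hx0
    exact (mp.iterate k).quasiMeasurePreserving.ae this
  filter_upwards [hlim.eventually (gt_mem_nhds (ENNReal.ofReal_pos.2 hδ))] with n hn
  refine ⟨Finset.univ.filter fun w => Real.exp (-(n * b)) ≤ chainWeight r n w, ?_, ?_⟩
  · have h1 := sum_chainWeight_le hr hs n
    set W := Finset.univ.filter fun w => Real.exp (-(n * b)) ≤ chainWeight r n w with hW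
    have h2 : (W.card : ℝ) * Real.exp (-(n * b)) ≤ (m : ℝ) ^ N := by
      refine le_trans ?_ h1
      rw [← nsmul_eq_mul]
      refine (Finset.card_nsmul_le_sum W (chainWeight r n) _ fun w hw => ?_).trans
        (Finset.sum_le_sum_of_subset_of_nonneg (Finset.subset_univ _)
          fun w _ _ => chainWeight_nonneg hr n w)
      exact (Finset.mem_filter.1 hw).2
    rw [Real.exp_neg, ← div_eq_mul_inv, div_le_iff₀ (Real.exp_pos _)] at h2
    exact h2
  · set B : Set X := {x | n * b ≤ ∑ k ∈ Finset.range n,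
      (fun x => -Real.log (r (itin T p (N + 1) x))) (T^[k] x)} with hB
    set A : Set X := {x | itin T p (N + n) x ∈
      Finset.univ.filter fun w => Real.exp (-(n * b)) ≤ chainWeight r n w} with hA
    have hcov : μ (Set.univ : Set X) ≤ μ (A ∪ B) := by
      refine measure_mono_ae ?_
      filter_upwards [hposr] with x hx _
      by_cases hxB : x ∈ B
      · exact Or.inr hxB
      · refine Or.inl ?_
        have h1 : ∑ k ∈ Finset.range n, -Real.log (r (itin T p (N + 1) (T^[k] x))) < n * b :=
          not_le.1 hxB
        rw [Finset.sum_neg_distrib] at h1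
        refine Finset.mem_filter.2 ⟨Finset.mem_univ _, ?_⟩
        rw [chainWeight_itin, ← Real.le_log_iff_exp_le (Finset.prod_pos fun k _ => hx k),
          Real.log_prod fun k _ => (hx k).ne']
        linarith
    rw [measure_univ] at hcov
    have h3 : (1 : ENNReal) ≤ μ A + ENNReal.ofReal δ :=
      hcov.trans ((measure_union_le _ _).trans (by gcongr))
    rw [ENNReal.ofReal_sub _ hδ.le, ENNReal.ofReal_one]
    exact tsub_le_iff_right.2 h3

/-! ### Cylinders are contained in small balls -/

/-- Along an orbit segment on which `x` and `y` stay `ε`-close, expansion forces `x` and `y` to be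
exponentially close; the exceptional `y` form a null set for each fixed `x`. -/
theorem ae_dist_lt_of_itin_eq {X : Type*} [MetricSpace X] [MeasurableSpace X]
    {T : X → X} {μ : Measure X} (mp : MeasurePreserving T μ μ)
    {lam ε : ℝ} (hexp : ∀ x : X,
      μ {y | y ∈ ball x ε ∧ dist (T x) (T y) < Real.exp lam * dist x y} = 0)
    {m : ℕ} {p : X → Fin m} (hp : ∀ x y, p x = p y → dist x y < ε) (x : X) :
    ∀ᵐ y ∂μ, ∀ N n : ℕ, 0 < n → itin T p (N + n) y = itin T p (N + n) x →
      dist x y < ε * Real.exp lam * Real.exp (-(n * lam)) := by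
  have h1 : ∀ᵐ y ∂μ, ∀ k : ℕ, T^[k] y ∈ ball (T^[k] x) ε →
      Real.exp lam * dist (T^[k] x) (T^[k] y) ≤ dist (T^[k + 1] x) (T^[k + 1] y) := by
    rw [ae_all_iff]
    intro k
    have := (mp.iterate k).quasiMeasurePreserving.ae
      (measure_eq_zero_iff_ae_notMem.1 (hexp (T^[k] x)))
    filter_upwards [this] with y hy hyb
    rw [Function.iterate_succ_apply', Function.iterate_succ_apply']
    exact not_lt.1 fun h => hy ⟨hyb, h⟩
  filter_upwards [h1] with y hy N n hn hit
  have hclose : ∀ k < n, dist (T^[k] x) (T^[k] y) < ε := by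
    intro k hk
    exact hp _ _ (congrFun hit ⟨k, by omega⟩).symm
  have hgrow : ∀ k < n, Real.exp (k * lam) * dist x y ≤ dist (T^[k] x) (T^[k] y) := by
    intro k
    induction k with
    | zero => simp
    | succ k ih =>
      intro hk
      have h2 := ih (by omega)
      have h3 := hy k (by rw [mem_ball']; exact hclose k (by omega))
      refine le_trans ?_ h3
      have : Real.exp (((k + 1 : ℕ) : ℝ) * lam) = Real.exp lam * Real.exp (k * lam) := by
        rw [← Real.exp_add]; congr 1; push_cast; ring
      rw [this, mul_assoc]
      exact mul_le_mul_of_nonneg_left h2 (Real.exp_pos _).le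
  obtain ⟨k, rfl⟩ : ∃ k, n = k + 1 := ⟨n - 1, by omega⟩
  have h4 := (hgrow k (by omega)).trans_lt (hclose k (by omega))
  have h5 : ε * Real.exp lam * Real.exp (-(((k + 1 : ℕ) : ℝ) * lam)) =
      ε * Real.exp (-(k * lam)) := by
    rw [mul_assoc, ← Real.exp_add]; congr 2; push_cast; ring
  rw [h5, Real.exp_neg, ← div_eq_mul_inv, lt_div_iff₀ (Real.exp_pos _)]
  linarith

/-- A family of words describing measure `1 - δ` yields a cover by as many `β`-balls, centred at one
chosen point of each cylinder. -/
theorem Nmu_le_of_words {X : Type*} [MetricSpace X] [MeasurableSpace X]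
    {T : X → X} {μ : Measure X} [IsProbabilityMeasure μ]
    (mp : MeasurePreserving T μ μ)
    {lam ε : ℝ} (hexp : ∀ x : X,
      μ {y | y ∈ ball x ε ∧ dist (T x) (T y) < Real.exp lam * dist x y} = 0)
    {m : ℕ} {p : X → Fin m} (hp : ∀ x y, p x = p y → dist x y < ε) {N n : ℕ} (hn : 0 < n)
    {W : Finset (Fin (N + n) → Fin m)} {δ β : ℝ}
    (hW : ENNReal.ofReal (1 - δ) ≤ μ {x | itin T p (N + n) x ∈ W})
    (hβ : ε * Real.exp lam * Real.exp (-(n * lam)) ≤ β) :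
    Nmu μ β δ ≤ W.card := by
  classical
  obtain ⟨x₀⟩ : Nonempty X := nonempty_of_isProbabilityMeasure μ
  -- a point of each nonempty cylinder
  obtain ⟨c, hc⟩ : ∃ c : (Fin (N + n) → Fin m) → X, ∀ x,
      itin T p (N + n) (c (itin T p (N + n) x)) = itin T p (N + n) x := by
    have : ∀ w : Fin (N + n) → Fin m, ∃ z : X, ∀ x, itin T p (N + n) x = w →
        itin T p (N + n) z = w := by
      intro w
      by_cases h : ∃ z, itin T p (N + n) z = w
      · exact ⟨h.choose, fun _ _ => h.choose_spec⟩
      · exact ⟨x₀, fun x hx => absurd ⟨x, hx⟩ h⟩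
    choose c hc using this
    exact ⟨c, fun x => hc _ x rfl⟩
  refine le_trans (Nat.sInf_le ⟨W.image c, rfl, hW.trans (measure_mono_ae ?_)⟩)
    Finset.card_image_le
  have hall : ∀ᵐ y ∂μ, ∀ w, ∀ N n : ℕ, 0 < n → itin T p (N + n) y = itin T p (N + n) (c w) →
      dist (c w) y < ε * Real.exp lam * Real.exp (-(n * lam)) :=
    ae_all_iff.2 fun w => ae_dist_lt_of_itin_eq mp hexp hp (c w)
  filter_upwards [hall] with y hy hyW
  refine Set.mem_iUnion₂.2 ⟨c (itin T p (N + n) y), Finset.mem_image_of_mem _ hyW, ?_⟩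
  rw [mem_ball']
  exact (hy _ N n hn (hc y).symm).trans_le hβ

/-- A finite measurable partition, labelled by `p`, into sets on which distances stay below `ε`:
each point is sent to the nearest element of a finite `ε / 2`-net. -/
theorem exists_fine_partition [CompactSpace X] [Nonempty X] {ε : ℝ} (hε : 0 < ε) :
    ∃ (m : ℕ) (p : X → Fin m), 0 < m ∧ Measurable p ∧ ∀ x y, p x = p y → dist x y < ε := by
  let e := TopologicalSpace.denseSeq X
  have hcov : (Set.univ : Set X) ⊆ ⋃ k, ball (e k) (ε / 2) := by
    intro x _
    obtain ⟨k, hk⟩ :=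
      (TopologicalSpace.denseRange_denseSeq X).exists_dist_lt x (half_pos hε)
    exact Set.mem_iUnion.2 ⟨k, hk⟩
  obtain ⟨t, ht⟩ := isCompact_univ.elim_finite_subcover _ (fun k => isOpen_ball) hcov
  let M := t.sup _root_.id
  let q := SimpleFunc.nearestPtInd e M
  have hq : ∀ x, q x < M + 1 := fun x => Nat.lt_succ_of_le (SimpleFunc.nearestPtInd_le e M x)
  refine ⟨M + 1, fun x => ⟨q x, hq x⟩, Nat.succ_pos _, ?_, ?_⟩
  · refine measurable_to_countable' fun i => ?_
    have : (fun x => (⟨q x, hq x⟩ : Fin (M + 1))) ⁻¹' {i} = q ⁻¹' {(i : ℕ)} := by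
      ext x; simp [Fin.ext_iff]
    rw [this]
    exact q.measurableSet_preimage _
  · have hd : ∀ x, dist (e (q x)) x < ε / 2 := by
      intro x
      obtain ⟨k, hk, hxk⟩ := Set.mem_iUnion₂.1 (ht (Set.mem_univ x))
      have h1 := SimpleFunc.edist_nearestPt_le e x (Finset.le_sup (f := _root_.id) hk : k ≤ M)
      rw [edist_dist, edist_dist, ENNReal.ofReal_le_ofReal_iff dist_nonneg] at h1
      exact h1.trans_lt (mem_ball'.1 hxk)
    intro x y hxy
    have hxy' : q x = q y := by simpa using hxy
    have h1 := hd x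
    have h2 := hd y
    rw [← hxy'] at h2
    have := dist_triangle_left x y (e (q x))
    linarith

/-! ### The upper capacity -/

/-- The real limsup of a nonnegative function is nonnegative, bounded or not: it has the junk
value `0` when the function is unbounded above. -/
theorem limsup_nonneg_of_eventually {α : Type*} {f : Filter α} [f.NeBot] {u : α → ℝ}
    (h : ∀ᶠ a in f, 0 ≤ u a) : 0 ≤ limsup u f := by
  rw [limsup_eq]
  refine Real.sInf_nonneg fun a ha => ?_
  obtain ⟨x, hx⟩ := (h.and ha).exists
  exact hx.1.trans hx.2

theorem limsup_le_of_eventually_nonneg {α : Type*} {f : Filter α} [f.NeBot] {u : α → ℝ} {a : ℝ}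
    (h : ∀ᶠ x in f, 0 ≤ u x) (ha : ∀ᶠ x in f, u x ≤ a) : limsup u f ≤ a := by
  rw [limsup_eq]
  refine csInf_le ⟨0, fun c hc => ?_⟩ ha
  obtain ⟨x, hx⟩ := (h.and hc).exists
  exact hx.1.trans hx.2

theorem eventually_ratio_nonneg {X : Type*} [MetricSpace X] [MeasurableSpace X] (μ : Measure X)
    (δ : ℝ) :
    ∀ᶠ β : ℝ in nhdsWithin 0 (Set.Ioi 0), 0 ≤ Real.log (Nmu μ β δ) / (-Real.log β) := by
  filter_upwards [Ioo_mem_nhdsGT (zero_lt_one (α := ℝ))] with β hβ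
  exact div_nonneg (Real.log_natCast_nonneg _)
    (neg_nonneg.2 (Real.log_nonpos hβ.1.le hβ.2.le))

theorem upperCapacity_nonneg {X : Type*} [MetricSpace X] [MeasurableSpace X] (μ : Measure X) :
    0 ≤ upperCapacity μ :=
  limsup_nonneg_of_eventually (Eventually.of_forall fun δ =>
    limsup_nonneg_of_eventually (eventually_ratio_nonneg μ δ))

/-- Interpolating an exponential covering bound along the scales `exp (-n * lam)`. -/
theorem limsup_ratio_le {X : Type*} [MetricSpace X] [MeasurableSpace X] (μ : Measure X)
    {δ lam b C K : ℝ} (hlam : 0 < lam) (hb : 0 < b) (hC : 0 < C) (hK : 1 ≤ K)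
    (h : ∀ᶠ n : ℕ in atTop, ∀ β : ℝ, C * Real.exp (-(n * lam)) ≤ β →
      (Nmu μ β δ : ℝ) ≤ K * Real.exp (n * b)) :
    limsup (fun β : ℝ => Real.log (Nmu μ β δ) / (-Real.log β)) (nhdsWithin 0 (Set.Ioi 0))
      ≤ b / lam := by
  refine le_of_forall_gt_imp_ge_of_dense fun c hc => ?_
  refine limsup_le_of_eventually_nonneg (eventually_ratio_nonneg μ δ) ?_
  have hlog : Tendsto (fun β : ℝ => -Real.log β) (nhdsWithin 0 (Set.Ioi 0)) atTop :=
    tendsto_neg_atBot_atTop.comp Real.tendsto_log_nhdsGT_zero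
  have hnat : Tendsto (fun β : ℝ => ⌈(Real.log C + -Real.log β) / lam⌉₊)
      (nhdsWithin 0 (Set.Ioi 0)) atTop :=
    tendsto_nat_ceil_atTop.comp
      ((tendsto_atTop_add_const_left _ _ hlog).atTop_div_const hlam)
  -- the constant absorbing the rounding of the scale and the factors `C`, `K`
  set D : ℝ := Real.log K + b * (Real.log C / lam + 1) with hD
  have hcpos : 0 < c - b / lam := by linarith
  filter_upwards [hnat.eventually h, hlog.eventually_ge_atTop (D / (c - b / lam)),
    hlog.eventually_gt_atTop 0, hlog.eventually_gt_atTop (-Real.log C), self_mem_nhdsWithin]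
    with β hN hD1 hpos hpos2 hβ
  have hβ' : 0 < β := hβ
  set t := (Real.log C + -Real.log β) / lam with ht
  have htpos : 0 < t := div_pos (by linarith) hlam
  have hceil1 : t ≤ ⌈t⌉₊ := Nat.le_ceil _
  have hceil2 : (⌈t⌉₊ : ℝ) < t + 1 := Nat.ceil_lt_add_one htpos.le
  have hsc : C * Real.exp (-(⌈t⌉₊ * lam)) ≤ β := by
    rw [← Real.log_le_log_iff (by positivity) hβ', Real.log_mul hC.ne' (Real.exp_pos _).ne',
      Real.log_exp]
    have : t * lam ≤ ⌈t⌉₊ * lam := mul_le_mul_of_nonneg_right hceil1 hlam.le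
    rw [ht, div_mul_cancel₀ _ hlam.ne'] at this
    linarith
  have hbound := hN β hsc
  have hlogN : Real.log (Nmu μ β δ) ≤ Real.log K + ⌈t⌉₊ * b := by
    rcases Nat.eq_zero_or_pos (Nmu μ β δ) with h0 | h0
    · rw [h0]
      simp only [Nat.cast_zero, Real.log_zero]
      have := Real.log_nonneg hK
      positivity
    · have h0' : (0 : ℝ) < Nmu μ β δ := by exact_mod_cast h0
      refine (Real.log_le_log h0' hbound).trans_eq ?_
      rw [Real.log_mul (by linarith) (Real.exp_pos _).ne', Real.log_exp]
  rw [div_le_iff₀ hpos]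
  rw [div_le_iff₀ hcpos] at hD1
  have h1 : (⌈t⌉₊ : ℝ) * b ≤ (t + 1) * b := mul_le_mul_of_nonneg_right hceil2.le hb.le
  have h2 : Real.log K + (t + 1) * b = D + b / lam * -Real.log β := by
    rw [hD, ht]; field_simp; ring
  linarith

/-! ### Comparison with the entropy -/

theorem ksEntropy_nonneg {X : Type*} [MetricSpace X] [MeasurableSpace X] (T : X → X)
    (μ : Measure X) [IsProbabilityMeasure μ] : 0 ≤ ksEntropy T μ := by
  let p : X → Fin 1 := fun _ => 0
  have h0 : ∀ n, dynPartEntropy T μ p n = 0 := by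
    intro n
    have : ∀ s : Fin n → Fin 1, {x | ∀ i : Fin n, p (T^[(i : ℕ)] x) = s i} = Set.univ := by
      exact fun s => Set.eq_univ_of_forall fun x i => Subsingleton.elim _ _
    simp [dynPartEntropy, this]
  refine le_iSup_of_le 1 (le_iSup_of_le p (le_iSup_of_le measurable_const ?_))
  simp [h0]

/-- The bound for a single positive expansion rate. -/
theorem upperCapacity_mul_le [CompactSpace X] {T : X → X} {μ : Measure X}
    [IsProbabilityMeasure μ] (herg : Ergodic T μ) {lam : ℝ} (hlam : lam ∈ measExpSet T μ)
    (hpos : 0 < lam) : ((upperCapacity μ * lam : ℝ) : EReal) ≤ ksEntropy T μ := by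
  obtain ⟨ε, hε, hexp⟩ := hlam
  have : Nonempty X := nonempty_of_isProbabilityMeasure μ
  obtain ⟨m, p, hm, hp, hfine⟩ := exists_fine_partition (X := X) hε
  set H : ℝ := limsup (fun n : ℕ => dynPartEntropy T μ p n / n) atTop with hH
  have hHle : (H : EReal) ≤ ksEntropy T μ :=
    le_iSup_of_le m (le_iSup_of_le p (le_iSup_of_le hp le_rfl))
  have key : upperCapacity μ * lam ≤ max H 0 := by
    refine le_of_forall_gt_imp_ge_of_dense fun b hb => ?_
    obtain ⟨hbH, hb0⟩ := max_lt_iff.1 hb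
    rw [← le_div_iff₀ hpos]
    obtain ⟨N, hN⟩ := exists_typical_words herg hm hp hbH
    refine limsup_le_of_eventually_nonneg (Eventually.of_forall fun δ =>
      limsup_nonneg_of_eventually (eventually_ratio_nonneg μ δ)) ?_
    filter_upwards [self_mem_nhdsWithin] with δ hδ
    refine limsup_ratio_le μ hpos hb0 (C := ε * Real.exp lam) (K := (m : ℝ) ^ N)
      (by positivity) (one_le_pow₀ (by exact_mod_cast hm)) ?_
    filter_upwards [hN δ hδ, eventually_gt_atTop 0] with n hW hn β hβ
    obtain ⟨W, hcard, hWμ⟩ := hW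
    refine le_trans ?_ hcard
    exact_mod_cast Nmu_le_of_words herg.toMeasurePreserving hexp hfine hn hWμ hβ
  refine (EReal.coe_le_coe_iff.2 key).trans ?_
  rcases max_cases H 0 with h | h
  · rw [h.1]; exact hHle
  · rw [h.1]; exact ksEntropy_nonneg T μ

theorem entropy_ge_upperCapacity_mul_exponent
    [CompactSpace X] (T : X → X) (hT : Continuous T)
    (μ : Measure X) [IsProbabilityMeasure μ] (herg : Ergodic T μ) :
    (upperCapacity μ : EReal) * Emeas T μ ≤ ksEntropy T μ := by
  have hks := ksEntropy_nonneg T μ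
  rcases (upperCapacity_nonneg μ).eq_or_lt with h0 | h0
  · rw [← h0]; simpa using hks
  -- for positive capacity, divide and check each rate separately
  · rw [mul_comm, ← EReal.le_div_iff_mul_le (EReal.coe_pos.2 h0) (EReal.coe_ne_top _)]
    refine sSup_le ?_
    rintro _ ⟨lam, hlam, rfl⟩
    rw [EReal.le_div_iff_mul_le (EReal.coe_pos.2 h0) (EReal.coe_ne_top _), mul_comm,
      ← EReal.coe_mul]
    rcases le_or_gt lam 0 with hl | hl
    · exact (EReal.coe_le_coe_iff.2 (mul_nonpos_of_nonneg_of_nonpos h0.le hl)).trans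
        (by simpa using hks)
    · exact upperCapacity_mul_le herg hlam hl
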